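/- arXiv:1805.09118 — 3 statements merged into one kernel-verified Lean document; each statement's English description precedes it below -/
import Mathlib

section
/- Let m ≥ 3 with 3 | m, and let a, e, ℓ be positive integers with e | m², a² | e, (e/a) | m, e/a² odd, gcd(e/a², a) = 1, ℓ | m, and such that there exists a positive integer w with (e/a²) | (w² − w + 1). Then there exists a subgroup G of M with |G| = 3e such that: N(G) has order e; π(G) is generated by a 3-cycle; |N(G) ∩ H_i| = a for each i ∈ {1,2,3}; every element of G ∖ N(G) has order 3; and the number of elements of G ∖ N(G) whose W-component lies in the kernel of s₃ equals 2e if a | m/3 and ℓ | m/3, equals 0 if a | m/3 and ℓ ∤ m/3, and equals 2e/3 if a ∤ m/3. -/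
/-- `V = (ZMod m)³`, written multiplicatively. -/
abbrev Vgrp (m : ℕ) : Type := Fin 3 → Multiplicative (ZMod m)

/-- The diagonal embedding `ZMod m → (ZMod m)³`. -/
def diagHom (m : ℕ) : Multiplicative (ZMod m) →* Vgrp m :=
  MonoidHom.mk' (fun t _ => t) (fun _ _ => rfl)

/-- The diagonal subgroup `Δ = {(t,t,t)}` of `(ZMod m)³`. -/
def Δgrp (m : ℕ) : Subgroup (Vgrp m) := (diagHom m).range

/-- `W = (ZMod m)³ ⧸ Δ`. -/
abbrev Wgrp (m : ℕ) : Type := Vgrp m ⧸ Δgrp m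

/-- The action of `S₃ = Equiv.Perm (Fin 3)` on `(ZMod m)³` permuting the coordinates. -/
def permV (m : ℕ) : Equiv.Perm (Fin 3) →* MulAut (Vgrp m) :=
  MonoidHom.mk'
    (fun σ => MulEquiv.arrowCongr σ (MulEquiv.refl (Multiplicative (ZMod m))))
    (fun σ τ => by ext v i; rfl)

lemma permV_map_diag (m : ℕ) (σ : Equiv.Perm (Fin 3)) :
    (Δgrp m).map (permV m σ) = Δgrp m := by
  ext v
  constructor
  · rintro ⟨_, ⟨t, rfl⟩, rfl⟩
    exact ⟨t, rfl⟩
  · rintro ⟨t, rfl⟩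
    exact ⟨diagHom m t, ⟨t, rfl⟩, rfl⟩

/-- The action of `S₃` on `W`, permuting the three coordinates (well defined since
`Δ` is invariant). -/
def permW (m : ℕ) : Equiv.Perm (Fin 3) →* MulAut (Wgrp m) :=
  MonoidHom.mk'
    (fun σ => QuotientGroup.congr (Δgrp m) (Δgrp m) (permV m σ) (permV_map_diag m σ))
    (fun σ τ => by
      ext x
      refine QuotientGroup.induction_on x (fun v => ?_)
      rfl)

/-- `M = W ⋊ S₃`. -/
abbrev Mgrp (m : ℕ) : Type := Wgrp m ⋊[permW m] Equiv.Perm (Fin 3)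

/-- `N(G) = G ∩ W`, where `W` is identified with the kernel of the projection
`π = rightHom : M → S₃` (i.e. with `W × {1} ≤ M`). -/
def NG {m : ℕ} (G : Subgroup (Mgrp m)) : Subgroup (Mgrp m) :=
  G ⊓ (SemidirectProduct.rightHom : Mgrp m →* Equiv.Perm (Fin 3)).ker

/-- The subgroup of `V = (ZMod m)³` of triples whose two coordinates with index
different from `i` are equal. -/
def HV (m : ℕ) (i : Fin 3) : Subgroup (Vgrp m) :=
  MonoidHom.ker (MonoidHom.mk' (fun v : Vgrp m => v (i + 1) / v (i + 2))
    (fun _ _ => mul_div_mul_comm _ _ _ _))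

/-- `H_i ≤ W`: classes of triples whose two coordinates with index different
from `i` are equal. -/
def Hsub (m : ℕ) (i : Fin 3) : Subgroup (Wgrp m) :=
  (HV m i).map (QuotientGroup.mk' (Δgrp m))

/-- `H_i`, identified with the subgroup `H_i × {1}` of `M`. -/
def HsubM (m : ℕ) (i : Fin 3) : Subgroup (Mgrp m) :=
  (Hsub m i).map (SemidirectProduct.inl : Wgrp m →* Mgrp m)

/-- The subgroup `3·(ZMod m)` of `ZMod m`. -/
def threeSub (m : ℕ) : AddSubgroup (ZMod m) :=
  AddMonoidHom.range (AddMonoidHom.mk' (fun x : ZMod m => 3 * x) (fun x y => mul_add 3 x y))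

/-- The homomorphism `V → (ZMod m)⧸(3·ZMod m)` sending `(x,y,z)` to the class of
`x + y + z` (written multiplicatively). -/
def sumV (m : ℕ) : Vgrp m →* Multiplicative (ZMod m ⧸ threeSub m) :=
  (AddMonoidHom.toMultiplicative (QuotientAddGroup.mk' (threeSub m))).comp
    (MonoidHom.mk' (fun v : Vgrp m => v 0 * v 1 * v 2)
      (fun v w => by
        simp only [Pi.mul_apply]
        rw [mul_mul_mul_comm (v 0) (w 0) (v 1) (w 1),
          mul_mul_mul_comm (v 0 * v 1) (w 0 * w 1) (v 2) (w 2)]))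

/-- `s₃ : W → (ZMod m)⧸(3·ZMod m)`, the well-defined homomorphism sending the class
of `(x,y,z)` to the class of `x + y + z`. -/
def s3Hom (m : ℕ) : Wgrp m →* Multiplicative (ZMod m ⧸ threeSub m) :=
  QuotientGroup.lift (Δgrp m) (sumV m) (by
    rintro v ⟨t, rfl⟩
    show sumV m (diagHom m t) = 1
    have h : ((Multiplicative.toAdd t + Multiplicative.toAdd t + Multiplicative.toAdd t : ZMod m) :
        ZMod m ⧸ threeSub m) = 0 :=
      (QuotientAddGroup.eq_zero_iff _).mpr
        ⟨Multiplicative.toAdd t, by show 3 * Multiplicative.toAdd t = _; ring⟩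
    exact congrArg (⇑Multiplicative.ofAdd) h)

/-!
`W` is identified with `ℤ[ω]/m` by sending the class of `(x, y, 0)` to `x + ωy`. The rotation of the
coordinates becomes multiplication by `ω`, the subgroups `H_i` become the lines spanned by
`1, ω, ω²`, and `s₃` becomes reduction modulo the prime `1 - ω` above `3`.

Put `n = e / a²` and `m = a * n * k`. As `n` divides the norm `w² - w + 1` of `w + ω`, the ideal
`k * (n, w + ω)` has norm `k² * n`, hence its image `U` in `W` is `ω`-stable of order
`m² / (k² * n) = e`; it contains an integer `s` iff `k * n ∣ s`, so it meets each `H_i` in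
`m / (k * n) = a` elements. The group `G` is generated by `U` and one element `g` above the
rotation. As `1 + ω + ω² = 0`, all elements above `3`-cycles have order `3`.

Finally `s₃` extends to a homomorphism on `M`, and counting its kernel in `G` and in `U` gives
`3e / |s₃(G)| - e / |s₃(U)|` elements of type (B1). Here `s₃(U)` is trivial iff `3 ∣ k * n` iff
`a ∣ m / 3`, and the choice of `g` decides whether `s₃(G)` is larger than `s₃(U)`.
-/

section GroupTheory

variable {A B : Type*} [Group A] [Group B] (f : A →* B)

lemma card_inf_ker_mul_card_map (K : Subgroup A) :
    Nat.card ↥(K ⊓ f.ker) * Nat.card ↥(K.map f) = Nat.card K := by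
  rw [← Subgroup.relIndex_ker, ← Subgroup.inf_relIndex_left, ← Subgroup.relIndex_bot_left,
    ← Subgroup.relIndex_bot_left, Subgroup.relIndex_mul_relIndex _ _ _ bot_le inf_le_left]

lemma card_inf_ker_eq_div (K : Subgroup A) [Finite K] :
    Nat.card ↥(K ⊓ f.ker) = Nat.card K / Nat.card ↥(K.map f) := by
  have : Finite ↥(K.map f) := inferInstanceAs (Finite (f '' K))
  rw [← card_inf_ker_mul_card_map f K, Nat.mul_div_cancel _ Nat.card_pos]

lemma card_mem_and_notMem_and_mem_ker {K L : Subgroup A} [Finite K] (h : L ≤ K) :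
    Nat.card {x : A // x ∈ K ∧ x ∉ L ∧ x ∈ f.ker} =
      Nat.card K / Nat.card ↥(K.map f) - Nat.card L / Nat.card ↥(L.map f) := by
  have : Finite L := Finite.Set.subset (K : Set A) h
  have hset : {x : A | x ∈ K ∧ x ∉ L ∧ x ∈ f.ker} = ↑(K ⊓ f.ker) \ ↑(L ⊓ f.ker) := by
    ext x
    simp only [Set.mem_ofPred_eq, Set.mem_sdiff, SetLike.mem_coe, Subgroup.mem_inf]
    tauto
  rw [← card_inf_ker_eq_div, ← card_inf_ker_eq_div]
  have : Finite ↥(L ⊓ f.ker) := Finite.Set.subset (L : Set A) inf_le_left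
  exact (congrArg Set.ncard hset).trans (Set.ncard_sdiff (inf_le_inf_right _ h))

variable {f} {U Z : Subgroup A}

lemma sup_inf_ker_of_disjoint (hU : U ≤ f.ker) (hZ : Z ≤ Subgroup.normalizer U)
    (hd : Disjoint Z f.ker) : (U ⊔ Z) ⊓ f.ker = U := by
  apply SetLike.coe_injective
  rw [Subgroup.coe_inf, Subgroup.coe_mul_of_right_le_normalizer_left U Z hZ,
    ← Subgroup.mul_inf_assoc U Z f.ker hU, hd.eq_bot, Subgroup.coe_bot, Set.mul_singleton]
  simp only [mul_one, Set.image_id']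

lemma map_sup_eq_map_right (hU : U ≤ f.ker) : (U ⊔ Z).map f = Z.map f := by
  rw [Subgroup.map_sup, (Subgroup.map_eq_bot_iff U).mpr hU, bot_sup_eq]

lemma disjoint_zpowers_ker {g : A} (hg : orderOf (f g) = orderOf g) :
    Disjoint (Subgroup.zpowers g) f.ker := by
  rw [Subgroup.disjoint_def]
  rintro _ ⟨j, rfl⟩ hj
  rwa [MonoidHom.mem_ker, map_zpow, ← orderOf_dvd_iff_zpow_eq_one, hg,
    orderOf_dvd_iff_zpow_eq_one] at hj

end GroupTheory

lemma isThreeCycle_of_mem_zpowers {α : Type*} [Fintype α] [DecidableEq α]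
    {σ τ : Equiv.Perm α} (hσ : σ.IsThreeCycle) (hτ : τ ∈ Subgroup.zpowers σ) (h1 : τ ≠ 1) :
    τ.IsThreeCycle := by
  rw [mem_zpowers_iff_mem_range_orderOf, hσ.orderOf] at hτ
  obtain ⟨j, hj, rfl⟩ := Finset.mem_image.mp hτ
  rw [Finset.mem_range] at hj
  interval_cases j
  · exact absurd (pow_zero σ) h1
  · rwa [pow_one]
  · rw [pow_two]
    exact hσ.isThreeCycle_sq

lemma isThreeCycle_finRotate_three : (finRotate 3).IsThreeCycle := cycleType_finRotate

section ZModDivisibility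

variable {m d : ℕ}

lemma natCast_dvd_natCast_zmod (hd : d ∣ m) (s : ℕ) : (d : ZMod m) ∣ s ↔ d ∣ s := by
  refine ⟨fun h => ?_, Nat.cast_dvd_cast⟩
  have := map_dvd (ZMod.castHom hd (ZMod d)) h
  rwa [map_natCast, map_natCast, ZMod.natCast_self, zero_dvd_iff, ZMod.natCast_eq_zero_iff] at this

lemma card_span_natCast_zmod (hm : m ≠ 0) (hd : d ∣ m) :
    Nat.card (Ideal.span {(d : ZMod m)}) = m / d := by
  have hspan : ((Ideal.span {(d : ZMod m)} : Ideal (ZMod m)) : Set (ZMod m)) =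
      AddSubgroup.zmultiples (d : ZMod m) := by
    ext x
    simp only [SetLike.mem_coe, Ideal.mem_span_singleton', AddSubgroup.mem_zmultiples_iff,
      zsmul_eq_mul, (ZMod.intCast_surjective (n := m)).exists]
  rw [← SetLike.coe_sort_coe, hspan, SetLike.coe_sort_coe, Nat.card_zmultiples,
    ZMod.addOrderOf_coe d hm, Nat.gcd_eq_right hd]

end ZModDivisibility

section EisensteinLattice

variable {R : Type*} [CommRing R]

/-- The image of the ideal `k * (n, w + ω)` of `R[ω]` under `x + ωy ↦ (x, y)`, where
`1 + ω + ω² = 0`; it is an ideal only if `n ∣ w² - w + 1`. -/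
def eisensteinLattice (k n w : R) : AddSubgroup (R × R) where
  carrier := {p | k ∣ p.2 ∧ k * n ∣ p.1 - w * p.2}
  zero_mem' := by simp
  add_mem' := by
    rintro p q ⟨hp₂, hp⟩ ⟨hq₂, hq⟩
    refine ⟨dvd_add hp₂ hq₂, ?_⟩
    have hsplit : (p + q).1 - w * (p + q).2 = (p.1 - w * p.2) + (q.1 - w * q.2) := by
      simp only [Prod.fst_add, Prod.snd_add]
      ring
    exact hsplit ▸ dvd_add hp hq
  neg_mem' := by
    rintro p ⟨hp₂, hp⟩
    refine ⟨hp₂.neg_right, ?_⟩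
    have hneg : (-p).1 - w * (-p).2 = -(p.1 - w * p.2) := by
      simp only [Prod.fst_neg, Prod.snd_neg]
      ring
    exact hneg ▸ hp.neg_right

variable {k n w : R}

lemma mk_mem_eisensteinLattice {x y : R} :
    (x, y) ∈ eisensteinLattice k n w ↔ k ∣ y ∧ k * n ∣ x - w * y := Iff.rfl

lemma card_eisensteinLattice (k n w : R) :
    Nat.card (eisensteinLattice k n w) =
      Nat.card (Ideal.span {k * n}) * Nat.card (Ideal.span {k}) := by
  rw [← Nat.card_prod]
  exact Nat.card_congr
    { toFun := fun p => (⟨p.1.1 - w * p.1.2, Ideal.mem_span_singleton.mpr p.2.2⟩,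
        ⟨p.1.2, Ideal.mem_span_singleton.mpr p.2.1⟩)
      invFun := fun q => ⟨(q.1 + w * q.2, q.2), Ideal.mem_span_singleton.mp q.2.2, by
        simpa only [add_sub_cancel_right] using Ideal.mem_span_singleton.mp q.1.2⟩
      left_inv := fun p => by simp
      right_inv := fun q => by simp }

lemma mk_zero_mem_eisensteinLattice {s : R} :
    (s, 0) ∈ eisensteinLattice k n w ↔ k * n ∣ s := by
  simp [mk_mem_eisensteinLattice]

-- Multiplication by `ω` sends `x + ωy` to `-y + ω(x - y)`.
lemma omega_mul_mem_eisensteinLattice (hw : n ∣ w ^ 2 - w + 1) {x y : R}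
    (h : (x, y) ∈ eisensteinLattice k n w) : (-y, x - y) ∈ eisensteinLattice k n w := by
  obtain ⟨hy, hx⟩ := h
  have hkx : k ∣ x := (dvd_iff_dvd_of_dvd_sub ((dvd_mul_right k n).trans hx)).mpr (hy.mul_left w)
  refine ⟨dvd_sub hkx hy, ?_⟩
  have hsplit : -y - w * (x - y) = -(w * (x - w * y)) - y * (w ^ 2 - w + 1) := by ring
  exact hsplit ▸ dvd_sub (hx.mul_left w).neg_right (mul_dvd_mul hy hw)

lemma omega_mul_mem_eisensteinLattice_iff (hw : n ∣ w ^ 2 - w + 1) {x y : R} :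
    (-y, x - y) ∈ eisensteinLattice k n w ↔ (x, y) ∈ eisensteinLattice k n w := by
  refine ⟨fun h => ?_, omega_mul_mem_eisensteinLattice hw⟩
  have hωω := omega_mul_mem_eisensteinLattice hw (omega_mul_mem_eisensteinLattice hw h)
  have hfst : -(-y - (x - y)) = x := by ring
  have hsnd : -(x - y) - (-y - (x - y)) = y := by ring
  rwa [hfst, hsnd] at hωω

lemma zero_mk_mem_eisensteinLattice (hw : n ∣ w ^ 2 - w + 1) {s : R} :
    (0, s) ∈ eisensteinLattice k n w ↔ k * n ∣ s := by
  rw [← mk_zero_mem_eisensteinLattice (w := w), ← omega_mul_mem_eisensteinLattice_iff hw (x := s),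
    neg_zero, sub_zero]

lemma neg_mk_neg_mem_eisensteinLattice (hw : n ∣ w ^ 2 - w + 1) {s : R} :
    (-s, -s) ∈ eisensteinLattice k n w ↔ k * n ∣ s := by
  rw [← zero_mk_mem_eisensteinLattice hw, ← omega_mul_mem_eisensteinLattice_iff hw (x := 0),
    zero_sub]

-- `x + y` is the residue of `x + ωy` modulo `1 - ω`.
lemma dvd_add_of_mem_eisensteinLattice {d : R} (hd : d ∣ k * n) (hw : d ∣ k * (w + 1))
    {x y : R} (h : (x, y) ∈ eisensteinLattice k n w) : d ∣ x + y := by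
  obtain ⟨⟨z, rfl⟩, hx⟩ := h
  have hsplit : x + k * z = (x - w * (k * z)) + k * (w + 1) * z := by ring
  exact hsplit ▸ dvd_add (hd.trans hx) (hw.mul_right z)

end EisensteinLattice

lemma three_dvd_mul_add_one {k n w : ℕ} (hw : (n : ℤ) ∣ (w : ℤ) ^ 2 - w + 1) (h : 3 ∣ k * n) :
    3 ∣ k * (w + 1) := by
  obtain hk | hn := (Nat.prime_three.dvd_mul).mp h
  · exact hk.mul_right _
  · have hsq : (3 : ℤ) ∣ ((w + 1 : ℕ) : ℤ) ^ 2 := by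
      have hsplit : ((w + 1 : ℕ) : ℤ) ^ 2 = ((w : ℤ) ^ 2 - w + 1) + 3 * w := by push_cast; ring
      exact hsplit ▸ dvd_add ((Int.natCast_dvd_natCast.mpr hn).trans hw) (dvd_mul_right 3 _)
    exact (Int.natCast_dvd_natCast.mp (Int.prime_three.dvd_of_dvd_pow hsq)).mul_left k

section Homologies

variable {m : ℕ}

/-- The homology `s ∈ ZMod m` of `H_i`: the class of the triple with entry `s` at `i` and `0`
elsewhere. -/
def homologyHom (m : ℕ) (i : Fin 3) : Multiplicative (ZMod m) →* Wgrp m :=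
  (QuotientGroup.mk' (Δgrp m)).comp (MonoidHom.mulSingle (fun _ => Multiplicative (ZMod m)) i)

lemma homologyHom_apply (i : Fin 3) (s : Multiplicative (ZMod m)) :
    homologyHom m i s = ((Pi.mulSingle i s : Vgrp m) : Wgrp m) := rfl

lemma wgrp_mk_eq_one_iff (v : Vgrp m) : (v : Wgrp m) = 1 ↔ ∀ i, v i = v 2 := by
  rw [QuotientGroup.eq_one_iff]
  exact ⟨by rintro ⟨t, rfl⟩ i; rfl, fun h => ⟨v 2, funext fun i => (h i).symm⟩⟩

lemma homologyHom_mul_mul (s : Multiplicative (ZMod m)) :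
    homologyHom m 0 s * homologyHom m 1 s * homologyHom m 2 s = 1 := by
  simp only [homologyHom_apply, ← QuotientGroup.mk_mul, wgrp_mk_eq_one_iff]
  intro i
  fin_cases i <;> simp

lemma homologyHom_injective (i : Fin 3) : Function.Injective (homologyHom m i) := by
  rw [injective_iff_map_eq_one]
  intro s hs
  rw [homologyHom_apply, wgrp_mk_eq_one_iff] at hs
  have h0 := hs 0
  have h1 := hs 1
  fin_cases i <;> simp_all

lemma range_homologyHom (i : Fin 3) : (homologyHom m i).range = Hsub m i := by
  apply le_antisymm
  · rintro _ ⟨s, rfl⟩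
    refine ⟨Pi.mulSingle i s, ?_, rfl⟩
    rw [SetLike.mem_coe, HV, MonoidHom.mem_ker, MonoidHom.mk'_apply]
    fin_cases i <;> simp
  · rintro _ ⟨v, hv, rfl⟩
    have hv' : v (i + 1) = v (i + 2) := div_eq_one.mp hv
    refine ⟨v i / v (i + 1), ?_⟩
    rw [homologyHom_apply, QuotientGroup.mk'_apply, ← div_eq_one, ← QuotientGroup.mk_div,
      wgrp_mk_eq_one_iff]
    intro j
    fin_cases i <;> fin_cases j <;> simp_all

lemma permW_homologyHom (σ : Equiv.Perm (Fin 3)) (i : Fin 3) (s : Multiplicative (ZMod m)) :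
    permW m σ (homologyHom m i s) = homologyHom m (σ i) s := by
  refine congrArg (QuotientGroup.mk' (Δgrp m)) (funext fun j => ?_)
  change (Pi.mulSingle i s : Vgrp m) (σ⁻¹ j) = (Pi.mulSingle (σ i) s : Vgrp m) j
  simp only [Pi.mulSingle_apply, Equiv.Perm.inv_eq_iff_eq]

/-- The coordinates `x + ωy ↦ [(x, y, 0)]` on `W`, identifying it with `ℤ[ω]/m`. -/
def wgrpCoordHom (m : ℕ) : Multiplicative (ZMod m × ZMod m) →* Wgrp m :=
  MonoidHom.mk'
    (fun p => homologyHom m 0 (.ofAdd p.toAdd.1) * homologyHom m 1 (.ofAdd p.toAdd.2))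
    (fun p q => by
      simp only [toAdd_mul, Prod.fst_add, Prod.snd_add, ofAdd_add, map_mul, mul_mul_mul_comm])

lemma wgrpCoordHom_ofAdd (x y : ZMod m) :
    wgrpCoordHom m (.ofAdd (x, y)) = homologyHom m 0 (.ofAdd x) * homologyHom m 1 (.ofAdd y) := rfl

lemma wgrpCoordHom_injective : Function.Injective (wgrpCoordHom m) := by
  rw [injective_iff_map_eq_one]
  rintro ⟨x, y⟩ h
  change homologyHom m 0 (.ofAdd x) * homologyHom m 1 (.ofAdd y) = 1 at h
  simp only [homologyHom_apply, ← QuotientGroup.mk_mul, wgrp_mk_eq_one_iff] at h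
  have hx : x = 0 := by simpa using h 0
  have hy : y = 0 := by simpa using h 1
  rw [hx, hy]
  rfl

lemma homologyHom_zero_ofAdd (s : ZMod m) :
    homologyHom m 0 (.ofAdd s) = wgrpCoordHom m (.ofAdd (s, 0)) := by
  rw [wgrpCoordHom_ofAdd, ofAdd_zero, map_one, mul_one]

lemma homologyHom_one_ofAdd (s : ZMod m) :
    homologyHom m 1 (.ofAdd s) = wgrpCoordHom m (.ofAdd (0, s)) := by
  rw [wgrpCoordHom_ofAdd, ofAdd_zero, map_one, one_mul]

lemma homologyHom_two_ofAdd (s : ZMod m) :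
    homologyHom m 2 (.ofAdd s) = wgrpCoordHom m (.ofAdd (-s, -s)) := by
  rw [wgrpCoordHom_ofAdd, ofAdd_neg, map_inv, map_inv, ← mul_inv]
  exact eq_inv_of_mul_eq_one_right (homologyHom_mul_mul (.ofAdd s))

lemma permW_wgrpCoordHom (x y : ZMod m) :
    permW m (finRotate 3) (wgrpCoordHom m (.ofAdd (x, y))) =
      wgrpCoordHom m (.ofAdd (-y, x - y)) := by
  rw [wgrpCoordHom_ofAdd, map_mul, permW_homologyHom, permW_homologyHom]
  change homologyHom m 1 (.ofAdd x) * homologyHom m 2 (.ofAdd y) = _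
  rw [homologyHom_one_ofAdd, homologyHom_two_ofAdd, ← map_mul, ← ofAdd_add, Prod.mk_add_mk,
    zero_add, ← sub_eq_add_neg]

end Homologies

section ThreeCycles

lemma apply_ne_self_of_isThreeCycle {σ : Equiv.Perm (Fin 3)} (hσ : σ.IsThreeCycle) (i : Fin 3) :
    σ i ≠ i := by
  rw [← Equiv.Perm.mem_support, Finset.eq_univ_of_card _ hσ.card_support]
  exact Finset.mem_univ i

lemma mul_apply_mul_apply_apply_of_isThreeCycle {A : Type*} [CommMonoid A]
    {σ : Equiv.Perm (Fin 3)} (hσ : σ.IsThreeCycle) (v : Fin 3 → A) (i : Fin 3) :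
    v i * v (σ i) * v (σ (σ i)) = ∏ j, v j := by
  have h₁ : i ≠ σ i := (apply_ne_self_of_isThreeCycle hσ i).symm
  have h₂ : i ≠ σ (σ i) := (apply_ne_self_of_isThreeCycle hσ.isThreeCycle_sq i).symm
  have h₃ : σ i ≠ σ (σ i) := σ.injective.ne h₁
  have huniv : ({i, σ i, σ (σ i)} : Finset (Fin 3)) = Finset.univ :=
    Finset.eq_univ_of_card _ (Finset.card_eq_three.mpr ⟨_, _, _, h₁, h₂, h₃, rfl⟩)
  rw [← huniv, Finset.prod_insert (by simp [h₁, h₂]), Finset.prod_pair h₃, mul_assoc]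

variable {m : ℕ}

-- This is `1 + ω + ω² = 0`.
lemma mul_permW_mul_permW_permW {σ : Equiv.Perm (Fin 3)} (hσ : σ.IsThreeCycle) (u : Wgrp m) :
    u * permW m σ u * permW m σ (permW m σ u) = 1 := by
  induction u using QuotientGroup.induction_on with
  | H v =>
    refine (wgrp_mk_eq_one_iff _).mpr fun i => ?_
    have hprod := mul_apply_mul_apply_apply_of_isThreeCycle hσ.inv v
    exact (hprod i).trans (hprod 2).symm

lemma orderOf_eq_three_of_isThreeCycle_right {x : Mgrp m} (hx : x.right.IsThreeCycle) :
    orderOf x = 3 := by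
  have : Fact (Nat.Prime 3) := ⟨Nat.prime_three⟩
  refine orderOf_eq_prime ?_ fun h => hx.ne_one (congrArg SemidirectProduct.right h)
  have hright : x.right ^ 3 = 1 := orderOf_dvd_iff_pow_eq_one.mp hx.orderOf.dvd
  ext1
  · rw [pow_three, SemidirectProduct.mul_left, SemidirectProduct.mul_left, map_mul, ← mul_assoc,
      mul_permW_mul_permW_permW hx, SemidirectProduct.one_left]
  · rw [pow_three, SemidirectProduct.mul_right, SemidirectProduct.mul_right, ← pow_three, hright,
      SemidirectProduct.one_right]

end ThreeCycles

section CyclicExtension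

variable {m : ℕ}

/-- The subgroup of `M` generated by `U ≤ W` and the element `(t, σ)`; it is the extension of
`⟨σ⟩` by `U` when `σ` is a `3`-cycle stabilizing `U`. -/
def cyclicExtension (U : Subgroup (Wgrp m)) (t : Wgrp m) (σ : Equiv.Perm (Fin 3)) :
    Subgroup (Mgrp m) :=
  U.map SemidirectProduct.inl ⊔ Subgroup.zpowers ⟨t, σ⟩

lemma mk_mul_inl_mul_mk_inv (t u : Wgrp m) (σ : Equiv.Perm (Fin 3)) :
    (⟨t, σ⟩ : Mgrp m) * SemidirectProduct.inl u * (⟨t, σ⟩ : Mgrp m)⁻¹ =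
      SemidirectProduct.inl (permW m σ u) := by
  rw [mul_inv_eq_iff_eq_mul]
  ext1
  · simp only [SemidirectProduct.mul_left, SemidirectProduct.left_inl,
      SemidirectProduct.right_inl, map_one, MulAut.one_apply, mul_comm]
  · simp only [SemidirectProduct.mul_right, SemidirectProduct.right_inl, mul_one, one_mul]

lemma card_map_inl (U : Subgroup (Wgrp m)) :
    Nat.card ↥(U.map (SemidirectProduct.inl : Wgrp m →* Mgrp m)) = Nat.card U :=
  Subgroup.card_map_of_injective SemidirectProduct.inl_injective

lemma map_inl_le_ker_rightHom (U : Subgroup (Wgrp m)) :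
    U.map (SemidirectProduct.inl : Wgrp m →* Mgrp m) ≤
      (SemidirectProduct.rightHom : Mgrp m →* Equiv.Perm (Fin 3)).ker :=
  SemidirectProduct.range_inl_eq_ker_rightHom (φ := permW m) ▸ U.map_le_range _

variable {U : Subgroup (Wgrp m)} {t : Wgrp m} {σ : Equiv.Perm (Fin 3)}

lemma map_rightHom_cyclicExtension :
    (cyclicExtension U t σ).map SemidirectProduct.rightHom = Subgroup.zpowers σ :=
  (map_sup_eq_map_right (map_inl_le_ker_rightHom U)).trans (MonoidHom.map_zpowers _ _)

lemma orderOf_eq_three_of_mem_cyclicExtension (hσ : σ.IsThreeCycle) {x : Mgrp m}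
    (hx : x ∈ cyclicExtension U t σ) (hxN : x ∉ NG (cyclicExtension U t σ)) : orderOf x = 3 := by
  have hright : x.right ∈ Subgroup.zpowers σ :=
    map_rightHom_cyclicExtension (U := U) (t := t) ▸ Subgroup.mem_map_of_mem _ hx
  exact orderOf_eq_three_of_isThreeCycle_right
    (isThreeCycle_of_mem_zpowers hσ hright fun h => hxN ⟨hx, h⟩)

instance finite_mgrp [NeZero m] : Finite (Mgrp m) :=
  Finite.of_equiv _ SemidirectProduct.equivProd.symm

variable [NeZero m]

lemma zpowers_mk_le_normalizer (hU : ∀ u ∈ U, permW m σ u ∈ U) :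
    Subgroup.zpowers (⟨t, σ⟩ : Mgrp m) ≤
      Subgroup.normalizer (U.map (SemidirectProduct.inl : Wgrp m →* Mgrp m)) := by
  rw [Subgroup.zpowers_le]
  apply Subgroup.mem_normalizer_fintype
  rintro _ ⟨u, hu, rfl⟩
  exact ⟨_, hU u hu, (mk_mul_inl_mul_mk_inv t u σ).symm⟩

lemma NG_cyclicExtension (hσ : σ.IsThreeCycle) (hU : ∀ u ∈ U, permW m σ u ∈ U) :
    NG (cyclicExtension U t σ) = U.map SemidirectProduct.inl := by
  refine sup_inf_ker_of_disjoint (map_inl_le_ker_rightHom U) (zpowers_mk_le_normalizer hU)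
    (disjoint_zpowers_ker ?_)
  exact hσ.orderOf.trans (orderOf_eq_three_of_isThreeCycle_right hσ).symm

lemma card_NG_cyclicExtension (hσ : σ.IsThreeCycle) (hU : ∀ u ∈ U, permW m σ u ∈ U) :
    Nat.card (NG (cyclicExtension U t σ)) = Nat.card U := by
  rw [NG_cyclicExtension hσ hU, card_map_inl]

lemma card_cyclicExtension (hσ : σ.IsThreeCycle) (hU : ∀ u ∈ U, permW m σ u ∈ U) :
    Nat.card (cyclicExtension U t σ) = 3 * Nat.card U := by
  rw [← card_inf_ker_mul_card_map SemidirectProduct.rightHom, map_rightHom_cyclicExtension,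
    Nat.card_zpowers, hσ.orderOf, mul_comm, ← card_NG_cyclicExtension (t := t) hσ hU, NG]

lemma card_NG_cyclicExtension_inf_HsubM (hσ : σ.IsThreeCycle) (hU : ∀ u ∈ U, permW m σ u ∈ U)
    (i : Fin 3) :
    Nat.card ↥(NG (cyclicExtension U t σ) ⊓ HsubM m i) = Nat.card ↥(U ⊓ Hsub m i) := by
  rw [NG_cyclicExtension hσ hU, HsubM, ← Subgroup.map_inf _ _ _ SemidirectProduct.inl_injective,
    card_map_inl]

end CyclicExtension

section S3

variable {m : ℕ}

lemma s3Hom_permW (σ : Equiv.Perm (Fin 3)) (u : Wgrp m) :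
    s3Hom m (permW m σ u) = s3Hom m u := by
  have hsum (v : Vgrp m) : s3Hom m v =
      .ofAdd (QuotientAddGroup.mk' (threeSub m) (Multiplicative.toAdd (∏ i, v i))) := by
    rw [Fin.prod_univ_three]
    rfl
  induction u using QuotientGroup.induction_on with
  | H v => exact (hsum _).trans ((congrArg _ (Equiv.prod_comp σ⁻¹ v)).trans (hsum v).symm)

/-- The extension of `s₃` to `M` that is trivial on `S₃`. -/
def s3HomM (m : ℕ) : Mgrp m →* Multiplicative (ZMod m ⧸ threeSub m) :=
  MonoidHom.mk' (fun x => s3Hom m x.left) fun x y => by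
    rw [SemidirectProduct.mul_left, map_mul, s3Hom_permW]

lemma mem_threeSub_iff (s : ZMod m) : s ∈ threeSub m ↔ ((3 : ℕ) : ZMod m) ∣ s :=
  exists_congr fun _ => eq_comm

lemma s3Hom_wgrpCoordHom_eq_one_iff (x y : ZMod m) :
    s3Hom m (wgrpCoordHom m (.ofAdd (x, y))) = 1 ↔ ((3 : ℕ) : ZMod m) ∣ x + y := by
  have hsum : s3Hom m (wgrpCoordHom m (.ofAdd (x, y))) =
      .ofAdd ((x + 0 + (0 + y) + (0 + 0) : ZMod m) : ZMod m ⧸ threeSub m) := rfl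
  rw [hsum, ofAdd_eq_one, QuotientAddGroup.eq_zero_iff, mem_threeSub_iff, add_zero, add_zero,
    zero_add, add_zero]

lemma s3Hom_homologyHom_zero_eq_one_iff (hm3 : 3 ∣ m) (s : ℕ) :
    s3Hom m (homologyHom m 0 (.ofAdd (s : ZMod m))) = 1 ↔ 3 ∣ s := by
  rw [homologyHom_zero_ofAdd, s3Hom_wgrpCoordHom_eq_one_iff, add_zero,
    natCast_dvd_natCast_zmod hm3]

variable [NeZero m]

lemma card_quotient_threeSub (hm3 : 3 ∣ m) :
    Nat.card (Multiplicative (ZMod m ⧸ threeSub m)) = 3 := by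
  have hspan : threeSub m = (Ideal.span {((3 : ℕ) : ZMod m)}).toAddSubgroup := by
    ext s
    exact (mem_threeSub_iff s).trans Ideal.mem_span_singleton.symm
  have hcard : Nat.card (threeSub m) = m / 3 := by
    rw [hspan]
    exact card_span_natCast_zmod (NeZero.ne m) hm3
  have hindex := (threeSub m).card_mul_index
  rw [hcard, Nat.card_zmod] at hindex
  have hm : 0 < m / 3 := Nat.div_pos (Nat.le_of_dvd (NeZero.pos m) hm3) three_pos
  exact Nat.eq_of_mul_eq_mul_left hm (hindex.trans (Nat.div_mul_cancel hm3).symm)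

variable {U : Subgroup (Wgrp m)} {t : Wgrp m} {σ : Equiv.Perm (Fin 3)}

lemma card_B1_cyclicExtension (hσ : σ.IsThreeCycle) (hU : ∀ u ∈ U, permW m σ u ∈ U) :
    Nat.card {x : Mgrp m // x ∈ cyclicExtension U t σ ∧ x ∉ NG (cyclicExtension U t σ) ∧
        x.left ∈ (s3Hom m).ker} =
      3 * Nat.card U / Nat.card ↥(U.map (s3Hom m) ⊔ Subgroup.zpowers (s3Hom m t)) -
        Nat.card U / Nat.card ↥(U.map (s3Hom m)) := by
  have hmapU : (U.map SemidirectProduct.inl).map (s3HomM m) = U.map (s3Hom m) :=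
    Subgroup.map_map _ _ _
  have hmapG : (cyclicExtension U t σ).map (s3HomM m) =
      U.map (s3Hom m) ⊔ Subgroup.zpowers (s3Hom m t) := by
    rw [cyclicExtension, Subgroup.map_sup, hmapU, MonoidHom.map_zpowers]
    rfl
  rw [← hmapG, ← hmapU, ← card_cyclicExtension (t := t) hσ hU, ← card_map_inl U,
    ← NG_cyclicExtension (t := t) hσ hU]
  exact card_mem_and_notMem_and_mem_ker (s3HomM m) inf_le_left

lemma card_B1_cyclicExtension_of_map_eq_bot_of_eq_one (hσ : σ.IsThreeCycle)
    (hU : ∀ u ∈ U, permW m σ u ∈ U) (hs : U.map (s3Hom m) = ⊥) (ht : s3Hom m t = 1) :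
    Nat.card {x : Mgrp m // x ∈ cyclicExtension U t σ ∧ x ∉ NG (cyclicExtension U t σ) ∧
      x.left ∈ (s3Hom m).ker} = 2 * Nat.card U := by
  rw [card_B1_cyclicExtension hσ hU, hs, ht, Subgroup.zpowers_one_eq_bot, bot_sup_eq,
    Subgroup.card_bot]
  omega

lemma card_B1_cyclicExtension_of_map_eq_bot_of_ne_one (hm3 : 3 ∣ m) (hσ : σ.IsThreeCycle)
    (hU : ∀ u ∈ U, permW m σ u ∈ U) (hs : U.map (s3Hom m) = ⊥) (ht : s3Hom m t ≠ 1) :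
    Nat.card {x : Mgrp m // x ∈ cyclicExtension U t σ ∧ x ∉ NG (cyclicExtension U t σ) ∧
      x.left ∈ (s3Hom m).ker} = 0 := by
  have : Fact (Nat.Prime 3) := ⟨Nat.prime_three⟩
  rw [card_B1_cyclicExtension hσ hU, hs, bot_sup_eq,
    zpowers_eq_top_of_prime_card (card_quotient_threeSub hm3) ht, Subgroup.card_bot,
    Subgroup.card_top, card_quotient_threeSub hm3]
  omega

lemma card_B1_cyclicExtension_of_map_eq_top (hm3 : 3 ∣ m) (hσ : σ.IsThreeCycle)
    (hU : ∀ u ∈ U, permW m σ u ∈ U) (hs : U.map (s3Hom m) = ⊤) :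
    Nat.card {x : Mgrp m // x ∈ cyclicExtension U t σ ∧ x ∉ NG (cyclicExtension U t σ) ∧
      x.left ∈ (s3Hom m).ker} = 2 * Nat.card U / 3 := by
  have hdvd := U.card_map_dvd (s3Hom m)
  rw [hs, Subgroup.card_top, card_quotient_threeSub hm3] at hdvd
  rw [card_B1_cyclicExtension hσ hU, hs, top_sup_eq, Subgroup.card_top,
    card_quotient_threeSub hm3]
  omega

end S3

section EisensteinSubgroup

/-- The subgroup of `W` corresponding to the ideal `k * (n, w + ω)` of `ℤ[ω]/m`. -/
def eisensteinSubgroup (m k n w : ℕ) : Subgroup (Wgrp m) :=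
  (eisensteinLattice (k : ZMod m) n w).toSubgroup.map (wgrpCoordHom m)

variable {m k n w : ℕ}

lemma wgrpCoordHom_mem_eisensteinSubgroup {x y : ZMod m} :
    wgrpCoordHom m (.ofAdd (x, y)) ∈ eisensteinSubgroup m k n w ↔
      (x, y) ∈ eisensteinLattice (k : ZMod m) n w :=
  Subgroup.mem_map_iff_mem wgrpCoordHom_injective

lemma natCast_dvd_sq_sub_add_one (hw : (n : ℤ) ∣ (w : ℤ) ^ 2 - w + 1) :
    (n : ZMod m) ∣ (w : ZMod m) ^ 2 - w + 1 := by
  simpa using map_dvd (Int.castRingHom (ZMod m)) hw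

lemma permW_mem_eisensteinSubgroup (hw : (n : ℤ) ∣ (w : ℤ) ^ 2 - w + 1) :
    ∀ u ∈ eisensteinSubgroup m k n w, permW m (finRotate 3) u ∈ eisensteinSubgroup m k n w := by
  rintro _ ⟨⟨x, y⟩, h, rfl⟩
  exact (permW_wgrpCoordHom x y).symm ▸ wgrpCoordHom_mem_eisensteinSubgroup.mpr
    (omega_mul_mem_eisensteinLattice (natCast_dvd_sq_sub_add_one hw) h)

lemma homologyHom_mem_eisensteinSubgroup (hw : (n : ℤ) ∣ (w : ℤ) ^ 2 - w + 1) (i : Fin 3)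
    (s : ZMod m) :
    homologyHom m i (.ofAdd s) ∈ eisensteinSubgroup m k n w ↔ ((k * n : ℕ) : ZMod m) ∣ s := by
  have hw' := natCast_dvd_sq_sub_add_one (m := m) hw
  rw [Nat.cast_mul]
  match i with
  | 0 => rw [homologyHom_zero_ofAdd, wgrpCoordHom_mem_eisensteinSubgroup,
      mk_zero_mem_eisensteinLattice]
  | 1 => rw [homologyHom_one_ofAdd, wgrpCoordHom_mem_eisensteinSubgroup,
      zero_mk_mem_eisensteinLattice hw']
  | 2 => rw [homologyHom_two_ofAdd, wgrpCoordHom_mem_eisensteinSubgroup,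
      neg_mk_neg_mem_eisensteinLattice hw']

lemma map_s3Hom_eisensteinSubgroup_eq_bot (hw : (n : ℤ) ∣ (w : ℤ) ^ 2 - w + 1)
    (h : 3 ∣ k * n) : (eisensteinSubgroup m k n w).map (s3Hom m) = ⊥ := by
  rw [Subgroup.map_eq_bot_iff]
  rintro _ ⟨⟨x, y⟩, hxy, rfl⟩
  refine (s3Hom_wgrpCoordHom_eq_one_iff x y).mpr (dvd_add_of_mem_eisensteinLattice ?_ ?_ hxy)
  · exact_mod_cast Nat.cast_dvd_cast (α := ZMod m) h
  · exact_mod_cast Nat.cast_dvd_cast (α := ZMod m) (three_dvd_mul_add_one hw h)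

variable {a : ℕ} [NeZero m]

lemma card_eisensteinSubgroup (hm : m = a * (k * n)) :
    Nat.card (eisensteinSubgroup m k n w) = a ^ 2 * n := by
  have hk : k ∣ m := hm ▸ (dvd_mul_right k n).mul_left a
  have hkn : k * n ∣ m := hm ▸ dvd_mul_left (k * n) a
  have hcard : Nat.card (eisensteinSubgroup m k n w) = m / (k * n) * (m / k) := by
    rw [eisensteinSubgroup, Subgroup.card_map_of_injective wgrpCoordHom_injective,
      ← card_span_natCast_zmod (NeZero.ne m) hkn, ← card_span_natCast_zmod (NeZero.ne m) hk,
      Nat.cast_mul]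
    exact card_eisensteinLattice _ _ _
  have hkn_pos : 0 < k * n := Nat.pos_of_dvd_of_pos hkn (NeZero.pos m)
  have hk_pos : 0 < k := Nat.pos_of_dvd_of_pos hk (NeZero.pos m)
  rw [hcard, Nat.div_eq_of_eq_mul_left hkn_pos hm,
    Nat.div_eq_of_eq_mul_left hk_pos (by rw [hm]; ring : m = a * n * k)]
  ring

lemma card_eisensteinSubgroup_inf_Hsub (hm : m = a * (k * n))
    (hw : (n : ℤ) ∣ (w : ℤ) ^ 2 - w + 1) (i : Fin 3) :
    Nat.card ↥(eisensteinSubgroup m k n w ⊓ Hsub m i) = a := by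
  have hkn : k * n ∣ m := hm ▸ dvd_mul_left (k * n) a
  have hcomap : (eisensteinSubgroup m k n w).comap (homologyHom m i) =
      (Ideal.span {((k * n : ℕ) : ZMod m)}).toAddSubgroup.toSubgroup := by
    ext s
    exact (homologyHom_mem_eisensteinSubgroup hw i s.toAdd).trans Ideal.mem_span_singleton.symm
  rw [← range_homologyHom, inf_comm, ← Subgroup.map_comap_eq,
    Subgroup.card_map_of_injective (homologyHom_injective i), hcomap]
  exact (card_span_natCast_zmod (NeZero.ne m) hkn).trans
    (Nat.div_eq_of_eq_mul_left (Nat.pos_of_dvd_of_pos hkn (NeZero.pos m)) hm)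

lemma map_s3Hom_eisensteinSubgroup_eq_top (hm3 : 3 ∣ m) (hw : (n : ℤ) ∣ (w : ℤ) ^ 2 - w + 1)
    (h : ¬ 3 ∣ k * n) : (eisensteinSubgroup m k n w).map (s3Hom m) = ⊤ := by
  have : Fact (Nat.Prime (Nat.card (Multiplicative (ZMod m ⧸ threeSub m)))) :=
    ⟨card_quotient_threeSub hm3 ▸ Nat.prime_three⟩
  refine (Subgroup.eq_bot_or_eq_top_of_prime_card _).resolve_left fun hbot => h ?_
  have hmem := (homologyHom_mem_eisensteinSubgroup (m := m) (k := k) hw 0 _).mpr (dvd_refl _)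
  rw [← s3Hom_homologyHom_zero_eq_one_iff hm3]
  exact (Subgroup.map_eq_bot_iff _).mp hbot hmem

end EisensteinSubgroup

lemma exists_s3Hom_eq_one_iff {m : ℕ} (hm3 : 3 ∣ m) (p : Prop) :
    ∃ t : Wgrp m, s3Hom m t = 1 ↔ p := by
  by_cases hp : p
  · exact ⟨1, by simp [hp]⟩
  · have h3 := (s3Hom_homologyHom_zero_eq_one_iff hm3 1).not.mpr (by decide)
    exact ⟨_, iff_of_false h3 hp⟩

lemma dvd_div_iff_dvd_of_eq_mul {m d a c : ℕ} (ha : 0 < a) (hm : m = a * c) (hd : d ∣ m) :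
    a ∣ m / d ↔ d ∣ c := by
  rw [Nat.dvd_div_iff_mul_dvd hd, hm, mul_comm d, Nat.mul_dvd_mul_iff_left ha]

theorem stmt12_general (m : ℕ) (hm : m ≠ 0) (hm3 : 3 ∣ m) (a e l : ℕ) (ha : 0 < a)
    (hae : a ^ 2 ∣ e) (hem : e / a ∣ m) (hw : ∃ w : ℕ, (e / a ^ 2) ∣ (w ^ 2 - w + 1)) :
    ∃ G : Subgroup (Mgrp m), ∃ σ : Equiv.Perm (Fin 3), σ.IsThreeCycle ∧
      Nat.card ↥G = 3 * e ∧
      Nat.card ↥(NG G) = e ∧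
      G.map (SemidirectProduct.rightHom : Mgrp m →* Equiv.Perm (Fin 3)) =
        Subgroup.zpowers σ ∧
      (∀ i : Fin 3, Nat.card ↥(NG G ⊓ HsubM m i) = a) ∧
      (∀ x ∈ G, x ∉ NG G → orderOf x = 3) ∧
      (let B := Nat.card
        {x : Mgrp m // x ∈ G ∧ x ∉ NG G ∧ x.left ∈ MonoidHom.ker (s3Hom m)}
       (a ∣ m / 3 → l ∣ m / 3 → B = 2 * e) ∧
       (a ∣ m / 3 → ¬ l ∣ m / 3 → B = 0) ∧
       (¬ a ∣ m / 3 → B = 2 * e / 3)) := by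
  have : NeZero m := ⟨hm⟩
  obtain ⟨n, rfl⟩ := hae
  obtain ⟨w, hw⟩ := hw
  rw [Nat.mul_div_cancel_left n (pow_pos ha 2)] at hw
  replace hw : (n : ℤ) ∣ (w : ℤ) ^ 2 - w + 1 := by
    simpa [Nat.cast_sub (Nat.le_self_pow two_ne_zero w)] using Int.natCast_dvd_natCast.mpr hw
  rw [pow_two, mul_assoc, Nat.mul_div_cancel_left _ ha] at hem
  obtain ⟨k, hk⟩ := hem
  have hmk : m = a * (k * n) := by rw [hk]; ring
  obtain ⟨t, ht⟩ := exists_s3Hom_eq_one_iff hm3 (l ∣ m / 3)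
  have hU := permW_mem_eisensteinSubgroup (m := m) (k := k) hw
  have hσ := isThreeCycle_finRotate_three
  rw [dvd_div_iff_dvd_of_eq_mul ha hmk hm3, ← ht, ← card_eisensteinSubgroup (w := w) hmk]
  refine ⟨cyclicExtension (eisensteinSubgroup m k n w) t (finRotate 3), finRotate 3, hσ,
    card_cyclicExtension hσ hU, card_NG_cyclicExtension hσ hU, map_rightHom_cyclicExtension,
    fun i => ?_, fun x => orderOf_eq_three_of_mem_cyclicExtension hσ,
    fun h3 ht1 => ?_, fun h3 ht1 => ?_, fun h3 => ?_⟩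
  · rw [card_NG_cyclicExtension_inf_HsubM hσ hU, card_eisensteinSubgroup_inf_Hsub hmk hw]
  · exact card_B1_cyclicExtension_of_map_eq_bot_of_eq_one hσ hU
      (map_s3Hom_eisensteinSubgroup_eq_bot hw h3) ht1
  · exact card_B1_cyclicExtension_of_map_eq_bot_of_ne_one hm3 hσ hU
      (map_s3Hom_eisensteinSubgroup_eq_bot hw h3) ht1
  · exact card_B1_cyclicExtension_of_map_eq_top hm3 hσ hU
      (map_s3Hom_eisensteinSubgroup_eq_top hm3 hw h3)

/-- Proposition 3.6(i) of Dalla Volta–Montanucci–Zini (case `3 ∣ m`): existence part.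
The final count is of the elements of `G ∖ N(G)` whose `W`-component lies in `ker s₃`
(those of type (B1), the others being of type (B3)). -/
theorem stmt12 (m : ℕ) (hm : 3 ≤ m) (hm3 : 3 ∣ m) (a e l : ℕ)
    (ha0 : 0 < a) (he0 : 0 < e) (hl0 : 0 < l)
    (h1 : e ∣ m ^ 2) (h2 : a ^ 2 ∣ e) (h3 : e / a ∣ m)
    (h4 : Odd (e / a ^ 2)) (h5 : Nat.gcd (e / a ^ 2) a = 1) (h6 : l ∣ m)
    (h7 : ∃ w : ℕ, 0 < w ∧ (e / a ^ 2) ∣ (w ^ 2 - w + 1)) :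
    ∃ G : Subgroup (Mgrp m), ∃ σ : Equiv.Perm (Fin 3), σ.IsThreeCycle ∧
      Nat.card ↥G = 3 * e ∧
      Nat.card ↥(NG G) = e ∧
      G.map (SemidirectProduct.rightHom : Mgrp m →* Equiv.Perm (Fin 3)) =
        Subgroup.zpowers σ ∧
      (∀ i : Fin 3, Nat.card ↥(NG G ⊓ HsubM m i) = a) ∧
      (∀ x ∈ G, x ∉ NG G → orderOf x = 3) ∧
      (let B := Nat.card
        {x : Mgrp m // x ∈ G ∧ x ∉ NG G ∧ x.left ∈ MonoidHom.ker (s3Hom m)}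
       (a ∣ m / 3 → l ∣ m / 3 → B = 2 * e) ∧
       (a ∣ m / 3 → ¬ l ∣ m / 3 → B = 0) ∧
       (¬ a ∣ m / 3 → B = 2 * e / 3)) := by
  obtain ⟨w, -, hw⟩ := h7
  exact stmt12_general m (by omega) hm3 a e l ha0 h2 h3 ⟨w, hw⟩
end

section
/- Let H and Ω be finite groups and n a positive integer such that ω^n = 1 for every ω ∈ Ω. Let G be a subgroup of the direct product H × Ω and let N = G ∩ ({1} × Ω), a normal subgroup of G. If the quotient group G/N is generated by elements whose orders are coprime to n, then G is the internal direct product of G(H) := G ∩ (H × {1}) and N; that is, G(H) and N commute elementwise, G(H) ∩ N = {1}, and G = G(H) · N. -/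
open Pointwise

/-!
Let `x ∈ G` have first coordinate of order coprime to `n`. Raising `x` to the power `n` kills its
second coordinate, while the first coordinate is itself a power of its `n`-th power; hence
`(x.1, 1)` is a power of `x` and lies in `G`. Since `G ⧸ N` is isomorphic to the projection of `G`
to `H`, the hypothesis says that such first coordinates generate this projection. So `G` contains
`(h, 1)` for every `h` in its projection, which is what it means for `G` to split.
-/

section Subdirect

variable {H Ω : Type*} [Group H] [Group Ω]

theorem mk_fst_one_mem_zpowers {x : H × Ω} {n : ℕ} (hfst : (orderOf x.1).Coprime n)
    (hsnd : x.2 ^ n = 1) : (x.1, (1 : Ω)) ∈ Subgroup.zpowers x := by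
  obtain ⟨m, hm⟩ := exists_pow_eq_self_of_coprime hfst.symm
  have hpow : (x ^ n) ^ m = (x.1, (1 : Ω)) := Prod.ext hm (by simp [hsnd])
  rw [← hpow, ← pow_mul]
  exact Subgroup.npow_mem_zpowers x (n * m)

theorem map_fst_le_comap_inl_of_closure_eq {n : ℕ} (hΩ : ∀ ω : Ω, ω ^ n = 1)
    {G : Subgroup (H × Ω)} {T : Set H} (hT : Subgroup.closure T = G.map (MonoidHom.fst H Ω))
    (hcop : ∀ t ∈ T, (orderOf t).Coprime n) :
    G.map (MonoidHom.fst H Ω) ≤ G.comap (MonoidHom.inl H Ω) := by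
  rw [← hT, Subgroup.closure_le]
  intro t ht
  obtain ⟨x, hx, rfl⟩ : t ∈ G.map (MonoidHom.fst H Ω) := hT ▸ Subgroup.subset_closure ht
  exact Subgroup.zpowers_le.mpr hx (mk_fst_one_mem_zpowers (hcop _ ht) (hΩ x.2))

theorem commute_of_mem_top_prod_bot_of_mem_bot_prod_top {x y : H × Ω}
    (hx : x ∈ (⊤ : Subgroup H).prod (⊥ : Subgroup Ω))
    (hy : y ∈ (⊥ : Subgroup H).prod (⊤ : Subgroup Ω)) : Commute x y := by
  obtain ⟨-, hx₂⟩ := Subgroup.mem_prod.mp hx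
  obtain ⟨hy₁, -⟩ := Subgroup.mem_prod.mp hy
  rw [Subgroup.mem_bot] at hx₂ hy₁
  exact Prod.ext (by simp [hy₁]) (by simp [hx₂])

theorem disjoint_top_prod_bot_bot_prod_top :
    Disjoint ((⊤ : Subgroup H).prod (⊥ : Subgroup Ω))
      ((⊥ : Subgroup H).prod (⊤ : Subgroup Ω)) :=
  Subgroup.disjoint_def.mpr fun hx hy => Prod.ext hy.1 hx.2

theorem inf_top_prod_bot_mul_inf_bot_prod_top {G : Subgroup (H × Ω)}
    (hG : G.map (MonoidHom.fst H Ω) ≤ G.comap (MonoidHom.inl H Ω)) :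
    ((G ⊓ (⊤ : Subgroup H).prod (⊥ : Subgroup Ω) : Subgroup (H × Ω)) : Set (H × Ω)) *
      ((G ⊓ (⊥ : Subgroup H).prod (⊤ : Subgroup Ω) : Subgroup (H × Ω)) : Set (H × Ω)) =
      (G : Set (H × Ω)) := by
  apply Set.Subset.antisymm
  · rintro _ ⟨x, hx, y, hy, rfl⟩
    exact G.mul_mem hx.1 hy.1
  · intro x hx
    have hfst : (x.1, (1 : Ω)) ∈ G := hG (Subgroup.mem_map_of_mem (MonoidHom.fst H Ω) hx)
    have hsnd : (x.1, (1 : Ω))⁻¹ * x ∈ G := G.mul_mem (G.inv_mem hfst) hx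
    exact ⟨_, ⟨hfst, by simp [Subgroup.mem_prod]⟩, _, ⟨hsnd, by simp [Subgroup.mem_prod]⟩,
      mul_inv_cancel_left _ _⟩

end Subdirect

theorem closure_kerLift_image_eq_range {A B : Type*} [Group A] [Group B] (f : A →* B)
    {S : Set (A ⧸ f.ker)} (hS : Subgroup.closure S = ⊤) :
    Subgroup.closure (QuotientGroup.kerLift f '' S) = f.range :=
  calc
    Subgroup.closure (QuotientGroup.kerLift f '' S)
      = (QuotientGroup.mk' f.ker).range.map (QuotientGroup.kerLift f) := by
        rw [← MonoidHom.map_closure, hS, QuotientGroup.range_mk']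
    _ = ((QuotientGroup.kerLift f).comp (QuotientGroup.mk' f.ker)).range :=
        (MonoidHom.range_comp _ _).symm
    _ = f.range := rfl

-- `orderOf` is `0` on elements of infinite order, so these may occur in `S` only if `n = 1`.
theorem stmt16_general {H Ω : Type*} [Group H] [Group Ω] {n : ℕ} (hΩ : ∀ ω : Ω, ω ^ n = 1)
    (G : Subgroup (H × Ω))
    (hgen : ∃ S : Set (↥G ⧸ MonoidHom.ker ((MonoidHom.fst H Ω).comp G.subtype)),
      Subgroup.closure S = ⊤ ∧ ∀ x ∈ S, Nat.Coprime (orderOf x) n) :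
    (∀ x ∈ G ⊓ (⊤ : Subgroup H).prod (⊥ : Subgroup Ω),
      ∀ y ∈ G ⊓ (⊥ : Subgroup H).prod (⊤ : Subgroup Ω), Commute x y) ∧
    (G ⊓ (⊤ : Subgroup H).prod (⊥ : Subgroup Ω)) ⊓
      (G ⊓ (⊥ : Subgroup H).prod (⊤ : Subgroup Ω)) = ⊥ ∧
    ((G ⊓ (⊤ : Subgroup H).prod (⊥ : Subgroup Ω) : Subgroup (H × Ω)) : Set (H × Ω)) *
      ((G ⊓ (⊥ : Subgroup H).prod (⊤ : Subgroup Ω) : Subgroup (H × Ω)) : Set (H × Ω)) =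
      (G : Set (H × Ω)) := by
  obtain ⟨S, hS, hcop⟩ := hgen
  let p := (MonoidHom.fst H Ω).comp G.subtype
  have hgen_fst : Subgroup.closure (QuotientGroup.kerLift p '' S) =
      G.map (MonoidHom.fst H Ω) := by
    rw [closure_kerLift_image_eq_range p hS, MonoidHom.range_comp, Subgroup.range_subtype]
  have hcop_fst : ∀ t ∈ QuotientGroup.kerLift p '' S, (orderOf t).Coprime n := by
    rintro _ ⟨s, hs, rfl⟩
    rw [orderOf_injective _ (QuotientGroup.kerLift_injective p)]
    exact hcop s hs
  refine ⟨fun x hx y hy => commute_of_mem_top_prod_bot_of_mem_bot_prod_top hx.2 hy.2,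
    (disjoint_top_prod_bot_bot_prod_top.mono inf_le_right inf_le_right).eq_bot, ?_⟩
  exact inf_top_prod_bot_mul_inf_bot_prod_top
    (map_fst_le_comap_inl_of_closure_eq hΩ hgen_fst hcop_fst)

/-- Remark 4.1 of Dalla Volta–Montanucci–Zini, in its natural generality.
`H` and `Ω` are finite groups, `n` is a positive integer with `ω^n = 1` for every
`ω ∈ Ω`, and `G ≤ H × Ω`. The subgroup `N = G ∩ ({1} × Ω)` of `G` is realized as the
kernel of the first projection restricted to `G` (so that `G ⧸ N` makes sense as a
group). If `G ⧸ N` is generated by elements of order coprime to `n`, then `G` is the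
internal direct product of `G(H) = G ∩ (H × {1})` and `G(Ω) = G ∩ ({1} × Ω)`. -/
theorem stmt16 (H Ω : Type*) [Group H] [Group Ω] [Finite H] [Finite Ω]
    (n : ℕ) (hn : 0 < n) (hΩ : ∀ ω : Ω, ω ^ n = 1)
    (G : Subgroup (H × Ω))
    (hgen : ∃ S : Set (↥G ⧸ MonoidHom.ker ((MonoidHom.fst H Ω).comp G.subtype)),
      Subgroup.closure S = ⊤ ∧ ∀ x ∈ S, Nat.Coprime (orderOf x) n) :
    (∀ x ∈ G ⊓ (⊤ : Subgroup H).prod (⊥ : Subgroup Ω),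
      ∀ y ∈ G ⊓ (⊥ : Subgroup H).prod (⊤ : Subgroup Ω), Commute x y) ∧
    (G ⊓ (⊤ : Subgroup H).prod (⊥ : Subgroup Ω)) ⊓
      (G ⊓ (⊥ : Subgroup H).prod (⊤ : Subgroup Ω)) = ⊥ ∧
    ((G ⊓ (⊤ : Subgroup H).prod (⊥ : Subgroup Ω) : Subgroup (H × Ω)) : Set (H × Ω)) *
      ((G ⊓ (⊥ : Subgroup H).prod (⊤ : Subgroup Ω) : Subgroup (H × Ω)) : Set (H × Ω)) =
      (G : Set (H × Ω)) :=
  stmt16_general hΩ G hgen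
end

section
/- For every positive integer n and every integer w, the element (−w, 1−w) of (ZMod n) × (ZMod n) belongs to the cyclic subgroup generated by (1, w) if and only if n divides w² − w + 1. -/
theorem intCast_prodMk_mem_zmultiples_one_prodMk_iff {R M : Type*} [Ring R] [AddCommGroup M]
    [Module R M] {m : ℤ} {x y : M} :
    ((m : R), y) ∈ AddSubgroup.zmultiples ((1 : R), x) ↔ (m : R) • x = y := by
  rw [AddSubgroup.mem_zmultiples_iff]
  constructor
  · rintro ⟨k, hk⟩
    obtain ⟨hkm, hky⟩ : (k : R) = m ∧ k • x = y := by
      simpa only [Prod.smul_mk, zsmul_one, Prod.mk.injEq] using hk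
    rw [← hkm, Int.cast_smul_eq_zsmul, hky]
  · intro hy
    exact ⟨m, by rw [Prod.smul_mk, zsmul_one, ← Int.cast_smul_eq_zsmul R m x, hy]⟩

/-- The key computation in the proofs of Propositions 3.5 and 3.6 of
Dalla Volta–Montanucci–Zini: `(−w, 1−w) ∈ ⟨(1, w)⟩` in `(ZMod n)²` if and only if
`n ∣ w² − w + 1`. -/
theorem stmt17 (n : ℕ) (hn : 0 < n) (w : ℤ) :
    (((-w : ℤ) : ZMod n), ((1 - w : ℤ) : ZMod n)) ∈
      AddSubgroup.zmultiples ((1 : ZMod n), ((w : ℤ) : ZMod n)) ↔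
    (n : ℤ) ∣ w ^ 2 - w + 1 := by
  have difference_eq : (1 - w) - -w * w = w ^ 2 - w + 1 := by ring
  rw [intCast_prodMk_mem_zmultiples_one_prodMk_iff, smul_eq_mul, ← Int.cast_mul,
    ZMod.intCast_eq_intCast_iff_dvd_sub, difference_eq]
end
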